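/- arXiv:2412.08044 — 4 statements merged into one kernel-verified Lean document; each statement's English description precedes it below -/
import Mathlib

section
/- Let m > 0 and k ∈ ℝ, and for each n ≥ 0 define the Hermite expansion coefficient c_n = ∫_ℝ e^{-m x² + i k x} Ĥ_n(x) dx of the function e^{-m x²} e^{i k x}. Then for every n ≥ 1 the coefficients satisfy the recurrence c_{n+1} = (1/(2m+1)) · i k · √(2/(n+1)) · c_n − ((2m−1)/(2m+1)) · √(n/(n+1)) · c_{n−1}. -/
open MeasureTheory Real
noncomputable section
def physHermite : ℕ → ℝ → ℝ
  | 0 => fun _ => 1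
  | 1 => fun x => 2 * x
  | n + 2 => fun x => 2 * x * physHermite (n + 1) x - 2 * (n + 1) * physHermite n x
def hermiteFun (n : ℕ) (x : ℝ) : ℝ :=
  (Real.sqrt (Real.sqrt Real.pi))⁻¹ * (Real.sqrt (2 ^ n * Nat.factorial n))⁻¹ *
    Real.exp (-x ^ 2 / 2) * physHermite n x

/-!
Write `f x = exp (-m x² + i k x)`, so that `f' = (-2 m x + i k) f`. The Hermite functions satisfy
`x Ĥₙ = √((n+1)/2) Ĥₙ₊₁ + √(n/2) Ĥₙ₋₁` and `Ĥₙ' = √(n/2) Ĥₙ₋₁ - √((n+1)/2) Ĥₙ₊₁`, which turn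
`(f Ĥₙ)'` into a linear combination of `f Ĥₙ₊₁`, `f Ĥₙ` and `f Ĥₙ₋₁`. Its integral over the line
vanishes because `f Ĥₙ` and its derivative are integrable: `f x * exp (-x²/2)` has Gaussian decay
whenever `-1/2 < re m`, for every complex `k`.

In every formula with an index `n - 1`, the truncated value at `n = 0` is multiplied by zero.
-/

theorem physHermite_succ (n : ℕ) (x : ℝ) :
    physHermite (n + 1) x = 2 * x * physHermite n x - 2 * n * physHermite (n - 1) x := by
  cases n <;> simp [physHermite]

theorem hasDerivAt_physHermite (n : ℕ) (x : ℝ) :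
    HasDerivAt (physHermite n) (2 * n * physHermite (n - 1) x) x := by
  induction n using Nat.twoStepInduction with
  | zero => simpa [physHermite] using hasDerivAt_const x (1 : ℝ)
  | one => simpa [physHermite] using (hasDerivAt_id x).const_mul 2
  | more n deriv_n deriv_succ =>
    have deriv_rec := (((hasDerivAt_id x).const_mul 2).mul deriv_succ).sub
      (deriv_n.const_mul (2 * (n + 1 : ℝ)))
    refine deriv_rec.congr_deriv ?_
    simp only [id, Nat.add_sub_cancel, Nat.add_succ_sub_one]
    push_cast
    linear_combination -2 * (n + 1) * physHermite_succ n x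

theorem exists_polynomial_eval_eq_physHermite (n : ℕ) :
    ∃ p : Polynomial ℝ, ∀ x, p.eval x = physHermite n x := by
  induction n using Nat.twoStepInduction with
  | zero => exact ⟨1, by simp [physHermite]⟩
  | one => exact ⟨2 * .X, by simp [physHermite]⟩
  | more n ih_n ih_succ =>
    obtain ⟨p, hp⟩ := ih_n
    obtain ⟨q, hq⟩ := ih_succ
    exact ⟨2 * .X * q - .C (2 * (n + 1 : ℝ)) * p, by simp [physHermite, hp, hq]⟩

/-- The factor of `hermiteFun n` in front of the Hermite polynomial: the Gaussian `exp (-x²/2)`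
divided by the `L²` norm of `exp (-x²/2) Hₙ`. -/
def hermiteWeight (n : ℕ) (x : ℝ) : ℝ :=
  (√(√π))⁻¹ * (√(2 ^ n * n.factorial))⁻¹ * exp (-x ^ 2 / 2)

theorem hermiteFun_eq_hermiteWeight_mul (n : ℕ) (x : ℝ) :
    hermiteFun n x = hermiteWeight n x * physHermite n x := rfl

theorem hasDerivAt_hermiteWeight (n : ℕ) (x : ℝ) :
    HasDerivAt (hermiteWeight n) (-x * hermiteWeight n x) x := by
  have deriv_exponent : HasDerivAt (fun y : ℝ => -y ^ 2 / 2) (-x) x :=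
    (((hasDerivAt_pow 2 x).neg).div_const 2).congr_deriv (by norm_num; ring)
  exact (deriv_exponent.exp.const_mul _).congr_deriv (by rw [hermiteWeight]; ring)

theorem sqrt_mul_hermiteWeight_succ (n : ℕ) (x : ℝ) :
    √((n + 1) / 2) * hermiteWeight (n + 1) x = hermiteWeight n x / 2 := by
  have norm_sq_succ :
      (2 : ℝ) ^ (n + 1) * (n + 1).factorial = 2 ^ 2 * ((n + 1) / 2) * (2 ^ n * n.factorial) := by
    rw [Nat.factorial_succ]; push_cast; ring
  have sqrt_succ :
      √((2 : ℝ) ^ (n + 1) * (n + 1).factorial) = 2 * √((n + 1) / 2) * √(2 ^ n * n.factorial) := by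
    rw [norm_sq_succ, sqrt_mul (by positivity), sqrt_mul (by positivity), sqrt_sq (by positivity)]
  have sqrt_ne_zero : √(((n : ℝ) + 1) / 2) ≠ 0 := by positivity
  rw [hermiteWeight, hermiteWeight, sqrt_succ]
  field_simp

theorem sqrt_mul_hermiteWeight_pred (n : ℕ) (x : ℝ) :
    √(n / 2) * hermiteWeight (n - 1) x = n * hermiteWeight n x := by
  cases n with
  | zero => simp
  | succ n =>
    have sq_sqrt : √(((n : ℝ) + 1) / 2) ^ 2 = (n + 1) / 2 := Real.sq_sqrt (by positivity)
    push_cast [Nat.add_sub_cancel]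
    linear_combination -2 * √(((n : ℝ) + 1) / 2) * sqrt_mul_hermiteWeight_succ n x
      + 2 * hermiteWeight (n + 1) x * sq_sqrt

theorem mul_hermiteFun (n : ℕ) (x : ℝ) :
    x * hermiteFun n x =
      √((n + 1) / 2) * hermiteFun (n + 1) x + √(n / 2) * hermiteFun (n - 1) x := by
  simp only [hermiteFun_eq_hermiteWeight_mul]
  linear_combination -physHermite (n + 1) x * sqrt_mul_hermiteWeight_succ n x
    - physHermite (n - 1) x * sqrt_mul_hermiteWeight_pred n x
    - hermiteWeight n x / 2 * physHermite_succ n x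

theorem hasDerivAt_hermiteFun (n : ℕ) (x : ℝ) :
    HasDerivAt (hermiteFun n)
      (√(n / 2) * hermiteFun (n - 1) x - √((n + 1) / 2) * hermiteFun (n + 1) x) x := by
  have deriv_mul := (hasDerivAt_hermiteWeight n x).mul (hasDerivAt_physHermite n x)
  refine deriv_mul.congr_deriv ?_
  have lowering := congrArg (· * physHermite (n - 1) x) (sqrt_mul_hermiteWeight_pred n x)
  have raising := mul_hermiteFun n x
  simp only [hermiteFun_eq_hermiteWeight_mul] at lowering raising ⊢
  linear_combination -raising - 2 * lowering

theorem abs_pow_le_factorial_mul_exp_add_exp (j : ℕ) (x : ℝ) :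
    |x| ^ j ≤ j.factorial * (exp x + exp (-x)) :=
  calc |x| ^ j ≤ j.factorial * exp |x| := by
        rw [← div_le_iff₀' (by positivity)]
        exact pow_div_factorial_le_exp |x| (abs_nonneg x) j
    _ ≤ j.factorial * (exp x + exp (-x)) := by
        gcongr
        exact exp_abs_le x

theorem integrable_cexp_quadratic_mul_pow {b : ℂ} (hb : b.re < 0) (c : ℂ) (j : ℕ) :
    Integrable fun x : ℝ => Complex.exp (b * x ^ 2 + c * x) * (x : ℂ) ^ j := by
  have integrable_shift (s : ℂ) :
      Integrable fun x : ℝ => Complex.exp (b * x ^ 2 + (c + s) * x) := by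
    simpa using integrable_cexp_quadratic' hb (c + s) 0
  have norm_shift (s x : ℝ) : ‖Complex.exp (b * x ^ 2 + (c + s) * x)‖ =
      ‖Complex.exp (b * x ^ 2 + c * x)‖ * exp (s * x) := by
    rw [add_mul, ← add_assoc, Complex.exp_add, norm_mul, ← Complex.ofReal_mul,
      Complex.norm_exp_ofReal]
  refine (((integrable_shift (1 : ℝ)).norm.add (integrable_shift (-1 : ℝ)).norm).const_mul
    (j.factorial : ℝ)).mono' (by fun_prop) (.of_forall fun x => ?_)
  simp only [Pi.add_apply, norm_shift, norm_mul, norm_pow, Complex.norm_real, norm_eq_abs,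
    one_mul, neg_one_mul]
  calc ‖Complex.exp (b * x ^ 2 + c * x)‖ * |x| ^ j
      ≤ ‖Complex.exp (b * x ^ 2 + c * x)‖ * (j.factorial * (exp x + exp (-x))) := by
        gcongr
        exact abs_pow_le_factorial_mul_exp_add_exp j x
    _ = _ := by ring

theorem integrable_cexp_quadratic_mul_polynomial_eval {b : ℂ} (hb : b.re < 0) (c : ℂ)
    (p : Polynomial ℂ) :
    Integrable fun x : ℝ => Complex.exp (b * x ^ 2 + c * x) * p.eval (x : ℂ) := by
  simp only [Polynomial.eval_eq_sum_range, Finset.mul_sum,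
    mul_left_comm _ (p.coeff _)]
  exact integrable_finsetSum _ fun j _ =>
    (integrable_cexp_quadratic_mul_pow hb c j).const_mul (p.coeff j)

/-- The Gaussian-damped plane wave `exp (-m x² + i k x)`, with complex parameters `m` and `k`. -/
def gaussianWave (m k : ℂ) (x : ℝ) : ℂ :=
  Complex.exp (-m * (x : ℂ) ^ 2 + Complex.I * k * (x : ℂ))

/-- The `n`-th Hermite expansion coefficient of `gaussianWave m k`. -/
def hermiteCoeff (m k : ℂ) (n : ℕ) : ℂ :=
  ∫ x : ℝ, gaussianWave m k x * (hermiteFun n x : ℂ)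

theorem hasDerivAt_gaussianWave (m k : ℂ) (x : ℝ) :
    HasDerivAt (gaussianWave m k) ((-2 * m * x + Complex.I * k) * gaussianWave m k x) x := by
  have deriv_coe : HasDerivAt (fun y : ℝ => (y : ℂ)) 1 x := Complex.ofRealCLM.hasDerivAt
  have deriv_exp := (((deriv_coe.pow 2).const_mul (-m)).add
    (deriv_coe.const_mul (Complex.I * k))).cexp
  refine deriv_exp.congr_deriv ?_
  simp only [gaussianWave, Pi.add_apply, Pi.pow_apply]
  ring

theorem hasDerivAt_gaussianWave_mul_hermiteFun (m k : ℂ) (n : ℕ) (x : ℝ) :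
    HasDerivAt (fun y : ℝ => gaussianWave m k y * (hermiteFun n y : ℂ))
      (Complex.I * k * (gaussianWave m k x * hermiteFun n x)
        - (2 * m - 1) * √(n / 2) * (gaussianWave m k x * hermiteFun (n - 1) x)
        - (2 * m + 1) * √((n + 1) / 2) * (gaussianWave m k x * hermiteFun (n + 1) x)) x := by
  have deriv_mul := (hasDerivAt_gaussianWave m k x).mul (hasDerivAt_hermiteFun n x).ofReal_comp
  refine deriv_mul.congr_deriv ?_
  have recurrence := congrArg Complex.ofReal (mul_hermiteFun n x)
  push_cast at recurrence ⊢
  linear_combination -2 * m * gaussianWave m k x * recurrence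

theorem integrable_gaussianWave_mul_hermiteFun {m : ℂ} (hm : -1 / 2 < m.re) (k : ℂ)
    (n : ℕ) :
    Integrable fun x : ℝ => gaussianWave m k x * (hermiteFun n x : ℂ) := by
  obtain ⟨p, hp⟩ := exists_polynomial_eval_eq_physHermite n
  have re_neg : (-(m + 1 / 2)).re < 0 := by
    rw [show (-(m + 1 / 2)).re = -(m.re + 1 / 2) by simp]
    linarith
  refine ((integrable_cexp_quadratic_mul_polynomial_eval re_neg (Complex.I * k)
    (p.map Complex.ofRealHom)).const_mul
      ((√(√π))⁻¹ * (√(2 ^ n * n.factorial))⁻¹ : ℝ)).congr (.of_forall fun x => ?_)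
  have eval_coe : (p.map Complex.ofRealHom).eval (x : ℂ) = physHermite n x := by
    rw [← hp, ← Complex.ofRealHom_eq_coe, Polynomial.eval_map_apply, Complex.ofRealHom_eq_coe]
  have exp_split : Complex.exp (-(m + 1 / 2) * x ^ 2 + Complex.I * k * x) =
      gaussianWave m k x * (exp (-x ^ 2 / 2) : ℝ) := by
    rw [gaussianWave, Complex.ofReal_exp, ← Complex.exp_add]
    push_cast
    ring_nf
  simp only [eval_coe, exp_split, hermiteFun]
  push_cast
  ring

theorem mul_hermiteCoeff_succ {m : ℂ} (hm : -1 / 2 < m.re) (k : ℂ) (n : ℕ) :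
    (2 * m + 1) * √((n + 1) / 2) * hermiteCoeff m k (n + 1) =
      Complex.I * k * hermiteCoeff m k n
        - (2 * m - 1) * √(n / 2) * hermiteCoeff m k (n - 1) := by
  have integrable_mul (a : ℂ) (j : ℕ) :
      Integrable fun x : ℝ => a * (gaussianWave m k x * (hermiteFun j x : ℂ)) :=
    (integrable_gaussianWave_mul_hermiteFun hm k j).const_mul a
  have integrable_first_two : Integrable fun x : ℝ =>
      Complex.I * k * (gaussianWave m k x * hermiteFun n x)
        - (2 * m - 1) * √(n / 2) * (gaussianWave m k x * hermiteFun (n - 1) x) :=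
    (integrable_mul _ n).sub (integrable_mul _ (n - 1))
  have integrable_last := integrable_mul ((2 * m + 1) * √((n + 1) / 2)) (n + 1)
  have integral_deriv := integral_eq_zero_of_hasDerivAt_of_integrable
    (hasDerivAt_gaussianWave_mul_hermiteFun m k n)
    (integrable_first_two.sub integrable_last)
    (integrable_gaussianWave_mul_hermiteFun hm k n)
  rw [integral_sub integrable_first_two integrable_last,
    integral_sub (integrable_mul _ _) (integrable_mul _ _)] at integral_deriv
  simp only [integral_const_mul] at integral_deriv
  simp only [hermiteCoeff]
  linear_combination -integral_deriv

theorem hermite_coeff_recurrence_general {m : ℂ} (hm : -1 / 2 < m.re) (k : ℂ) (n : ℕ) :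
    hermiteCoeff m k (n + 1) =
      (1 / (2 * m + 1)) * (Complex.I * k) * √(2 / (n + 1)) * hermiteCoeff m k n
        - ((2 * m - 1) / (2 * m + 1)) * √(n / (n + 1)) * hermiteCoeff m k (n - 1) := by
  have two_mul_add_one_ne_zero : 2 * m + 1 ≠ 0 := Complex.ne_zero_of_re_pos <| by
    rw [show (2 * m + 1).re = 2 * m.re + 1 by simp]
    linarith
  have sqrt_ne_zero : (√((n + 1) / 2) : ℂ) ≠ 0 :=
    Complex.ofReal_ne_zero.mpr (by positivity)
  have sqrt_two_div : √(2 / (n + 1)) = (√((n + 1) / 2))⁻¹ := by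
    rw [← sqrt_inv, inv_div]
  have sqrt_div_succ : √((n : ℝ) / (n + 1)) = √(n / 2) / √((n + 1) / 2) := by
    rw [← sqrt_div (by positivity), div_div_div_cancel_right₀ two_ne_zero]
  rw [sqrt_two_div, sqrt_div_succ]
  push_cast
  field_simp
  linear_combination mul_hermiteCoeff_succ hm k n

theorem hermite_coeff_recurrence (m k : ℝ) (hm : 0 < m) (c : ℕ → ℂ)
    (hc : ∀ n : ℕ, c n =
      ∫ x : ℝ, Complex.exp (-(m : ℂ) * (x : ℂ) ^ 2 + Complex.I * (k : ℂ) * (x : ℂ)) *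
        (hermiteFun n x : ℂ)) :
    ∀ n : ℕ, 1 ≤ n →
      c (n + 1) = (1 / (2 * (m : ℂ) + 1)) * (Complex.I * (k : ℂ)) *
          (Real.sqrt (2 / ((n : ℝ) + 1)) : ℂ) * c n
        - ((2 * (m : ℂ) - 1) / (2 * (m : ℂ) + 1)) *
          (Real.sqrt ((n : ℝ) / ((n : ℝ) + 1)) : ℂ) * c (n - 1) := by
  obtain rfl : c = hermiteCoeff m k := funext hc
  have re_m : -1 / 2 < (m : ℂ).re := by rw [Complex.ofReal_re]; linarith
  exact fun n _ => hermite_coeff_recurrence_general re_m k n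
end
end

section
/- For every n ≥ 0 and every k ∈ ℝ, ∫_ℝ e^{i k x} Ĥ_n(x) dx = i^n √(2π) Ĥ_n(k); equivalently, the Fourier transform satisfies 𝓕[Ĥ_n](k) = (−i)^n Ĥ_n(k), i.e. each Hermite function is an eigenfunction of the Fourier transform with eigenvalue (−i)^n. -/
open MeasureTheory Real
noncomputable section
/-- Fourier transform `𝓕[u](k) = (2π)^{-1/2} ∫ u(x) e^{-ikx} dx`. -/
def FT (u : ℝ → ℂ) (k : ℝ) : ℂ :=
  (Real.sqrt (2 * Real.pi) : ℂ)⁻¹ * ∫ x : ℝ, u x * Complex.exp (-Complex.I * (k : ℂ) * (x : ℂ))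

/-!
The Fourier transform `𝓕` turns multiplication by `x` into `i d/dk` and `d/dx` into multiplication
by `ik`, so the creation operator `A = x - d/dx` satisfies `𝓕 A = -i A 𝓕`. Since `A` sends
`e^{-x²/2} H_n` to `e^{-x²/2} H_{n+1}` and the Gaussian is a fixed point of `𝓕`, induction on `n`
gives the eigenvalue `(-i)^n`. The integral against `e^{ikx}` is a multiple of `𝓕` at `-k`, and
`H_n` has the parity of `n`.
-/

open Polynomial
open scoped FourierTransform

section FourierTransform

variable {u v : ℝ → ℂ}

lemma ofReal_sqrt_two_pi_ne_zero : (√(2 * π) : ℂ) ≠ 0 :=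
  Complex.ofReal_ne_zero.mpr (Real.sqrt_pos.mpr two_pi_pos).ne'

lemma integral_cexp_mul_eq_FT_neg (u : ℝ → ℂ) (k : ℝ) :
    ∫ x : ℝ, Complex.exp (Complex.I * k * x) * u x = √(2 * π) * FT u (-k) := by
  rw [FT, mul_inv_cancel_left₀ ofReal_sqrt_two_pi_ne_zero]
  congr with x
  rw [mul_comm]
  push_cast
  ring_nf

lemma FT_eq_fourier (u : ℝ → ℂ) (k : ℝ) : FT u k = (√(2 * π) : ℂ)⁻¹ * 𝓕 u (k / (2 * π)) := by
  rw [FT, fourier_real_eq_integral_exp_smul]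
  congr with x
  have phase_eq : -2 * π * x * (k / (2 * π)) = -(k * x) := by field_simp
  rw [phase_eq, smul_eq_mul, mul_comm]
  push_cast
  ring_nf

lemma FT_const_smul (c : ℂ) (u : ℝ → ℂ) : FT (c • u) = c • FT u := by
  ext k
  simp only [FT, Pi.smul_apply, smul_eq_mul, mul_assoc, integral_const_mul]
  ring

lemma FT_sub (hu : Integrable u) (hv : Integrable v) : FT (u - v) = FT u - FT v := by
  have integrable_mul_phase {w : ℝ → ℂ} (hw : Integrable w) (k : ℝ) :
      Integrable fun x : ℝ => w x * Complex.exp (-Complex.I * k * x) := by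
    refine hw.mul_bdd (c := 1) (by fun_prop) (.of_forall fun x => ?_)
    simp [Complex.norm_exp]
  ext k
  simp only [FT, Pi.sub_apply, sub_mul]
  rw [integral_sub (integrable_mul_phase hu k) (integrable_mul_phase hv k), mul_sub]

lemma FT_deriv (hu : Integrable u) (diff_u : Differentiable ℝ u) (hu' : Integrable (deriv u))
    (k : ℝ) : FT (deriv u) k = Complex.I * k * FT u k := by
  simp only [FT_eq_fourier, fourier_deriv hu diff_u hu', smul_eq_mul]
  push_cast
  field_simp

lemma hasDerivAt_FT (hu : Integrable u) (hxu : Integrable fun x : ℝ => (x : ℂ) * u x) (k : ℝ) :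
    HasDerivAt (FT u) (-Complex.I * FT (fun x : ℝ => x * u x) k) k := by
  have mul_x_eq : (fun x : ℝ => (-2 * π * Complex.I * x) • u x) =
      (-2 * π * Complex.I) • fun x : ℝ => x * u x := by
    ext x
    simp only [Pi.smul_apply, smul_eq_mul, mul_assoc]
  have hasDerivAt_rescaled : HasDerivAt (FT u) ((√(2 * π) : ℂ)⁻¹ * ((1 / (2 * π)) •
      𝓕 (fun x : ℝ => (-2 * π * Complex.I * x) • u x) (k / (2 * π)))) k := by
    rw [funext (FT_eq_fourier u)]
    exact ((hasDerivAt_fourier hu (by simpa using hxu) _).scomp k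
      ((hasDerivAt_id k).div_const _)).const_mul _
  convert! hasDerivAt_rescaled using 1
  calc -Complex.I * FT (fun x : ℝ => x * u x) k
      = (2 * π : ℂ)⁻¹ * FT ((-2 * π * Complex.I) • fun x : ℝ => x * u x) k := by
        rw [FT_const_smul, Pi.smul_apply, smul_eq_mul]
        field_simp
    _ = (√(2 * π) : ℂ)⁻¹ * ((1 / (2 * π)) •
          𝓕 (fun x : ℝ => (-2 * π * Complex.I * x) • u x) (k / (2 * π))) := by
        rw [mul_x_eq, FT_eq_fourier, Complex.real_smul]
        push_cast
        ring

end FourierTransform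

/-- The (unnormalised) creation operator `x - d/dx` of the harmonic oscillator. It uses
`deriv`, so it has this meaning only for differentiable `u`. -/
def creation (u : ℝ → ℂ) : ℝ → ℂ := fun x => x * u x - deriv u x

lemma creation_const_smul (c : ℂ) (u : ℝ → ℂ) : creation (c • u) = c • creation u := by
  ext x
  simp only [creation, deriv_const_smul_field, Pi.smul_apply, smul_eq_mul]
  ring

lemma FT_creation {u : ℝ → ℂ} (hu : Integrable u) (diff_u : Differentiable ℝ u)
    (hu' : Integrable (deriv u)) (hxu : Integrable fun x : ℝ => (x : ℂ) * u x) :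
    FT (creation u) = -Complex.I • creation (FT u) := by
  ext k
  calc FT (creation u) k = FT (fun x : ℝ => x * u x) k - FT (deriv u) k :=
        congrFun (FT_sub hxu hu') k
    _ = -Complex.I * (k * FT u k - deriv (FT u) k) := by
        rw [FT_deriv hu diff_u hu', (hasDerivAt_FT hu hxu k).deriv]
        linear_combination FT (fun x : ℝ => x * u x) k * Complex.I_sq

/-- The function `x ↦ p(x) e^{-x²/2}` on the real line, for a complex polynomial `p`. These
functions form a space preserved by differentiation and by multiplication by `x`. -/
def polyGaussian (p : ℂ[X]) (x : ℝ) : ℂ := p.eval (x : ℂ) * Complex.exp (-x ^ 2 / 2)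

lemma polyGaussian_X_mul (p : ℂ[X]) (x : ℝ) : polyGaussian (X * p) x = x * polyGaussian p x := by
  simp [polyGaussian, mul_assoc]

lemma hasDerivAt_polyGaussian (p : ℂ[X]) (x : ℝ) :
    HasDerivAt (polyGaussian p) (polyGaussian (derivative p - X * p) x) x := by
  have exponent_deriv : HasDerivAt (fun z : ℂ => -z ^ 2 / 2) (-(x : ℂ)) x := by
    simpa [neg_div] using (hasDerivAt_pow 2 (x : ℂ)).fun_neg.div_const 2
  convert! ((p.hasDerivAt (x : ℂ)).mul exponent_deriv.cexp).comp_ofReal using 1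
  simp only [polyGaussian, eval_sub, eval_mul, eval_X]
  ring

lemma deriv_polyGaussian (p : ℂ[X]) :
    deriv (polyGaussian p) = polyGaussian (derivative p - X * p) :=
  funext fun x => (hasDerivAt_polyGaussian p x).deriv

lemma creation_polyGaussian (p : ℂ[X]) :
    creation (polyGaussian p) = polyGaussian (2 * X * p - derivative p) := by
  ext x
  simp only [creation, deriv_polyGaussian, polyGaussian, eval_sub, eval_mul, eval_X, eval_ofNat]
  ring

lemma integrable_pow_mul_cexp_neg_mul_sq {b : ℂ} (hb : 0 < b.re) (m : ℕ) :
    Integrable fun x : ℝ => (x : ℂ) ^ m * Complex.exp (-b * x ^ 2) := by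
  have norm_integrable := integrable_rpow_mul_exp_neg_mul_sq hb (s := m)
    (neg_one_lt_zero.trans_le m.cast_nonneg)
  refine norm_integrable.mono (by fun_prop) (.of_forall fun x => ?_)
  rw [norm_mul, norm_mul, norm_cexp_neg_mul_sq, norm_pow, Complex.norm_real, rpow_natCast,
    norm_pow, Real.norm_of_nonneg (exp_pos _).le]

lemma integrable_polyGaussian (p : ℂ[X]) : Integrable (polyGaussian p) := by
  have sum_monomials : polyGaussian p = fun x : ℝ => ∑ m ∈ p.support,
      p.coeff m * ((x : ℂ) ^ m * Complex.exp (-(1 / 2) * x ^ 2)) := by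
    ext x
    rw [polyGaussian, eval_eq_sum, Polynomial.sum, Finset.sum_mul]
    refine Finset.sum_congr rfl fun m _ => ?_
    ring_nf
  rw [sum_monomials]
  exact integrable_finsetSum _ fun m _ =>
    (integrable_pow_mul_cexp_neg_mul_sq (by norm_num) m).const_mul _

lemma FT_creation_polyGaussian (p : ℂ[X]) :
    FT (creation (polyGaussian p)) = -Complex.I • creation (FT (polyGaussian p)) := by
  apply FT_creation (integrable_polyGaussian p)
  · exact fun x => (hasDerivAt_polyGaussian p x).differentiableAt
  · simpa only [deriv_polyGaussian] using integrable_polyGaussian (derivative p - X * p)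
  · simpa only [← polyGaussian_X_mul] using integrable_polyGaussian (X * p)

lemma FT_polyGaussian_one : FT (polyGaussian 1) = polyGaussian 1 := by
  have gaussian_eq (x : ℝ) : polyGaussian 1 x = Complex.exp (-(1 / 2) * x ^ 2) := by
    rw [polyGaussian, eval_one, one_mul]
    ring_nf
  have sqrt_eq : ((π : ℂ) / (1 / 2)) ^ (1 / 2 : ℂ) = √(2 * π) := by
    rw [Real.sqrt_eq_rpow, Complex.ofReal_cpow two_pi_pos.le]
    push_cast
    ring_nf
  have inverse_transform (k : ℝ) :
      ∫ x : ℝ, Complex.exp (Complex.I * k * x) * polyGaussian 1 x =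
        √(2 * π) * polyGaussian 1 (-k) := by
    simp only [gaussian_eq]
    rw [fourierIntegral_gaussian (by norm_num), sqrt_eq]
    push_cast
    ring_nf
  ext k
  apply mul_left_cancel₀ ofReal_sqrt_two_pi_ne_zero
  simpa only [integral_cexp_mul_eq_FT_neg, neg_neg] using inverse_transform (-k)

section HermitePolynomial

variable (R : Type*) [CommRing R]

/-- The Hermite polynomials `H_n` of the physicists as formal polynomials. Instead of the three-term
recursion of `physHermite`, the definition uses the recursion which the creation operator induces on
the polynomial factor of `polyGaussian`. -/
def physHermitePoly : ℕ → R[X]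
  | 0 => 1
  | n + 1 => 2 * X * physHermitePoly n - derivative (physHermitePoly n)

lemma physHermitePoly_zero : physHermitePoly R 0 = 1 := rfl

lemma physHermitePoly_succ (n : ℕ) : physHermitePoly R (n + 1) =
    2 * X * physHermitePoly R n - derivative (physHermitePoly R n) := rfl

lemma derivative_physHermitePoly_succ (n : ℕ) :
    derivative (physHermitePoly R (n + 1)) = 2 * (n + 1) * physHermitePoly R n := by
  induction n with
  | zero => simp [physHermitePoly_succ, physHermitePoly_zero]
  | succ n ih =>
    calc derivative (physHermitePoly R (n + 2))
        = 2 * physHermitePoly R (n + 1) + 2 * X * derivative (physHermitePoly R (n + 1)) -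
            derivative (derivative (physHermitePoly R (n + 1))) := by
          simp [physHermitePoly_succ R (n + 1)]
      _ = 2 * physHermitePoly R (n + 1) +
            2 * (n + 1 : R[X]) *
              (2 * X * physHermitePoly R n - derivative (physHermitePoly R n)) := by
          rw [ih]
          simp only [derivative_mul, derivative_ofNat, zero_mul, derivative_add,
            derivative_natCast, derivative_one, add_zero, mul_zero, zero_add]
          ring
      _ = 2 * ((n + 1 : ℕ) + 1) * physHermitePoly R (n + 1) := by
          rw [← physHermitePoly_succ]
          push_cast
          ring

lemma physHermitePoly_add_two (n : ℕ) : physHermitePoly R (n + 2) =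
    2 * X * physHermitePoly R (n + 1) - 2 * (n + 1 : R[X]) * physHermitePoly R n := by
  rw [physHermitePoly_succ, derivative_physHermitePoly_succ]

end HermitePolynomial

lemma FT_polyGaussian_physHermitePoly (n : ℕ) : FT (polyGaussian (physHermitePoly ℂ n)) =
    (-Complex.I) ^ n • polyGaussian (physHermitePoly ℂ n) := by
  induction n with
  | zero => simpa [physHermitePoly_zero] using FT_polyGaussian_one
  | succ n ih =>
    rw [physHermitePoly_succ, ← creation_polyGaussian, FT_creation_polyGaussian, ih,
      creation_const_smul, smul_smul, pow_succ']

lemma ofReal_physHermite (n : ℕ) (x : ℝ) :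
    (physHermite n x : ℂ) = (physHermitePoly ℂ n).eval (x : ℂ) := by
  induction n using Nat.twoStepInduction with
  | zero => simp [physHermite, physHermitePoly_zero]
  | one => simp [physHermite, physHermitePoly_succ, physHermitePoly_zero]
  | more n ih₀ ih₁ => simp [physHermite, physHermitePoly_add_two, ih₀, ih₁]

lemma physHermite_neg (n : ℕ) (x : ℝ) : physHermite n (-x) = (-1) ^ n * physHermite n x := by
  induction n using Nat.twoStepInduction with
  | zero => simp [physHermite]
  | one => simp [physHermite]
  | more n ih₀ ih₁ =>
    simp only [physHermite, ih₀, ih₁]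
    ring

lemma hermiteFun_neg (n : ℕ) (x : ℝ) : hermiteFun n (-x) = (-1) ^ n * hermiteFun n x := by
  rw [hermiteFun, hermiteFun, physHermite_neg, neg_sq]
  ring

lemma ofReal_hermiteFun (n : ℕ) : (fun x => (hermiteFun n x : ℂ)) =
    ((√√π)⁻¹ * (√(2 ^ n * n.factorial))⁻¹ : ℂ) • polyGaussian (physHermitePoly ℂ n) := by
  ext x
  simp only [hermiteFun, polyGaussian, Pi.smul_apply, smul_eq_mul, ← ofReal_physHermite]
  push_cast
  ring

lemma FT_hermiteFun (n : ℕ) : FT (fun x => (hermiteFun n x : ℂ)) =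
    (-Complex.I) ^ n • fun x => (hermiteFun n x : ℂ) := by
  rw [ofReal_hermiteFun, FT_const_smul, FT_polyGaussian_physHermitePoly, smul_comm]

/-- Hermite functions are eigenfunctions of the Fourier transform with eigenvalue `(-i)^n`. -/
theorem hermiteFun_fourier_eigen (n : ℕ) (k : ℝ) :
    (∫ x : ℝ, Complex.exp (Complex.I * (k : ℂ) * (x : ℂ)) * (hermiteFun n x : ℂ))
      = Complex.I ^ n * (Real.sqrt (2 * Real.pi) : ℂ) * (hermiteFun n k : ℂ) ∧
    FT (fun x => (hermiteFun n x : ℂ)) k = (-Complex.I) ^ n * (hermiteFun n k : ℂ) := by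
  refine ⟨?_, congrFun (FT_hermiteFun n) k⟩
  calc (∫ x : ℝ, Complex.exp (Complex.I * k * x) * (hermiteFun n x : ℂ))
      = √(2 * π) * FT (fun x => (hermiteFun n x : ℂ)) (-k) := integral_cexp_mul_eq_FT_neg _ k
    _ = √(2 * π) * ((-Complex.I) ^ n * ((-1) ^ n * hermiteFun n k)) := by
        simp [FT_hermiteFun, hermiteFun_neg]
    _ = Complex.I ^ n * √(2 * π) * hermiteFun n k := by
        rw [← mul_assoc (_ ^ n), ← mul_pow, neg_mul_neg, mul_one, mul_left_comm, mul_assoc]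

end
end

section
/- Let ∂̂_x = ∂_x + x (so ∂̂_x u (x) = u′(x) + x u(x)). There is an absolute constant C > 0 such that for every integer N ≥ 1 and every Ψ ∈ P̂_N, ‖∂̂_x Ψ‖ ≤ C √N ‖Ψ‖, where ‖·‖ is the L²(ℝ) norm. -/
open MeasureTheory Real
noncomputable section
def L2norm {E : Type*} [NormedAddCommGroup E] (f : ℝ → E) : ℝ :=
  Real.sqrt (∫ x : ℝ, ‖f x‖ ^ 2)
/-- Membership in `P̂_N = {e^{-x²/2} ψ : ψ polynomial of degree ≤ N}`. -/
def memPNR (N : ℕ) (v : ℝ → ℝ) : Prop :=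
  ∃ p : Polynomial ℝ, p.degree ≤ N ∧ ∀ x : ℝ, v x = Real.exp (-x ^ 2 / 2) * p.eval x

/-!
Conjugating by `e^{-x²/2}` turns `∂_x + x` into `d/dx` acting on polynomials, with the inner product
`⟨p, q⟩ = ∫ e^{-x²} p q`. There `d/dx` has the adjoint `D† = 2x - d/dx` and `[d/dx, D†] = 2`, so it
is the lowering operator of a harmonic oscillator. For such an operator `a` and a vector `v` with
`a^{N+1} v = 0`, Cauchy–Schwarz gives
`‖a v‖⁴ = ⟨v, a† a v⟩² ≤ ‖v‖² ‖a† a v‖² = ‖v‖² (‖a a v‖² + c ‖a v‖²)`,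
and `‖a v‖² ≤ c N ‖v‖²` follows by induction on `N`, since `a^N (a v) = 0`.
-/

open Polynomial

section LoweringOperator

variable {R V : Type*} [CommRing R] [AddCommGroup V] [Module R V]
  {B : V →ₗ[R] V →ₗ[R] R} {a a' : Module.End R V} {c : R}

lemma apply_raising_raising_eq (hB : B.IsSymm) (hadj : B.IsAdjointPair B a a')
    (hcomm : ⁅a, a'⁆ = c • 1) (v : V) :
    B (a' v) (a' v) = B (a v) (a v) + c * B v v := by
  have swap : a (a' v) = a' (a v) + c • v :=
    sub_eq_iff_eq_add'.mp (LinearMap.congr_fun hcomm v)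
  calc B (a' v) (a' v) = B (a (a' v)) v := (hadj _ _).symm
    _ = B (a' (a v)) v + c * B v v := by rw [swap, map_add, map_smul]; rfl
    _ = B v (a' (a v)) + c * B v v := by rw [← hB.eq v, RingHom.id_apply]
    _ = B (a v) (a v) + c * B v v := by rw [hadj v (a v)]

theorem apply_lowering_lowering_le [LinearOrder R] [IsStrictOrderedRing R] (hB : B.IsPosSemidef)
    (hadj : B.IsAdjointPair B a a') (hcomm : ⁅a, a'⁆ = c • 1) (hc : 0 ≤ c) {N : ℕ} {v : V}
    (hv : a^[N + 1] v = 0) :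
    B (a v) (a v) ≤ c * N * B v v := by
  induction N generalizing v with
  | zero =>
    have hav : a v = 0 := hv
    simp [hav]
  | succ N ih =>
    have lower : B (a (a v)) (a (a v)) ≤ c * N * B (a v) (a v) := ih hv
    have key : B (a v) (a v) * B (a v) (a v) ≤ c * (N + 1) * B v v * B (a v) (a v) := by
      calc B (a v) (a v) * B (a v) (a v) = B v (a' (a v)) ^ 2 := by rw [hadj v (a v), sq]
        _ ≤ B v v * B (a' (a v)) (a' (a v)) :=
          LinearMap.BilinForm.apply_sq_le_of_symm B hB.nonneg hB.isSymm _ _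
        _ = B v v * (B (a (a v)) (a (a v)) + c * B (a v) (a v)) := by
          rw [apply_raising_raising_eq hB.isSymm hadj hcomm]
        _ ≤ B v v * (c * N * B (a v) (a v) + c * B (a v) (a v)) := by
          gcongr
          exact hB.nonneg v
        _ = c * (N + 1) * B v v * B (a v) (a v) := by ring
    push_cast
    obtain hpos | hzero := (hB.nonneg (a v)).lt_or_eq
    · exact le_of_mul_le_mul_right key hpos
    · rw [← hzero]
      exact mul_nonneg (by positivity) (hB.nonneg v)

end LoweringOperator

section GaussianForm

variable {b : ℝ}

lemma integrable_exp_neg_mul_sq_mul_eval (hb : 0 < b) (p : ℝ[X]) :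
    Integrable fun x : ℝ => exp (-b * x ^ 2) * p.eval x := by
  induction p using Polynomial.induction_on' with
  | add p q hp hq => simpa only [eval_add, mul_add] using hp.fun_add hq
  | monomial n r =>
    have hn : (-1 : ℝ) < n := neg_one_lt_zero.trans_le n.cast_nonneg
    refine ((integrable_rpow_mul_exp_neg_mul_sq hb hn).const_mul r).congr (.of_forall fun x => ?_)
    simp only [rpow_natCast, eval_monomial]
    ring

/-- Integration of polynomials against the weight `e^{-b x²}`, as a linear functional.
It takes `0 < b` as an argument, which makes all these integrals converge. -/
def gaussianIntegral (hb : 0 < b) : ℝ[X] →ₗ[ℝ] ℝ where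
  toFun p := ∫ x : ℝ, exp (-b * x ^ 2) * p.eval x
  map_add' p q := by
    simp only [eval_add, mul_add]
    exact integral_add (integrable_exp_neg_mul_sq_mul_eval hb p)
      (integrable_exp_neg_mul_sq_mul_eval hb q)
  map_smul' r p := by
    simp only [eval_smul, smul_eq_mul, mul_left_comm _ r, integral_const_mul, RingHom.id_apply]

lemma gaussianIntegral_apply (hb : 0 < b) (p : ℝ[X]) :
    gaussianIntegral hb p = ∫ x : ℝ, exp (-b * x ^ 2) * p.eval x :=
  rfl

lemma gaussianIntegral_derivative (hb : 0 < b) (p : ℝ[X]) :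
    gaussianIntegral hb (derivative p) = 2 * b * gaussianIntegral hb (X * p) := by
  have hderiv (x : ℝ) : HasDerivAt (fun y => exp (-b * y ^ 2) * p.eval y)
      (exp (-b * x ^ 2) * (derivative p - (2 * b) • (X * p)).eval x) x := by
    have hexponent : HasDerivAt (fun y : ℝ => -b * y ^ 2) (-b * (2 * x)) x := by
      simpa using (hasDerivAt_pow 2 x).const_mul (-b)
    refine (hexponent.exp.fun_mul (p.hasDerivAt x)).congr_deriv ?_
    simp only [eval_sub, eval_smul, eval_mul, eval_X, smul_eq_mul]
    ring
  have hzero : gaussianIntegral hb (derivative p - (2 * b) • (X * p)) = 0 :=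
    integral_eq_zero_of_hasDerivAt_of_integrable hderiv
      (integrable_exp_neg_mul_sq_mul_eval hb _) (integrable_exp_neg_mul_sq_mul_eval hb _)
  rwa [map_sub, map_smul, smul_eq_mul, sub_eq_zero] at hzero

/-- The inner product `⟨p, q⟩ = ∫ e^{-b x²} p q` on polynomials, as a bilinear form. -/
def gaussianForm (hb : 0 < b) : ℝ[X] →ₗ[ℝ] ℝ[X] →ₗ[ℝ] ℝ :=
  (LinearMap.mul ℝ ℝ[X]).compr₂ (gaussianIntegral hb)

lemma gaussianForm_apply (hb : 0 < b) (p q : ℝ[X]) :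
    gaussianForm hb p q = gaussianIntegral hb (p * q) :=
  rfl

lemma gaussianForm_isPosSemidef (hb : 0 < b) : (gaussianForm hb).IsPosSemidef where
  eq p q := by simp only [gaussianForm_apply, mul_comm p q, RingHom.id_apply]
  nonneg p := by
    rw [gaussianForm_apply, gaussianIntegral_apply]
    refine integral_nonneg fun x => ?_
    rw [eval_mul]
    exact mul_nonneg (exp_nonneg _) (mul_self_nonneg _)

/-- The operator `2 b x - d/dx` on polynomials, the adjoint of `d/dx` for `gaussianForm`; for
`b = 1` it is the raising operator `H_n ↦ H_{n+1}` of the physicists' Hermite polynomials. -/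
def hermiteRaising (b : ℝ) : Module.End ℝ ℝ[X] :=
  (2 * b) • LinearMap.mulLeft ℝ X - derivative

lemma hermiteRaising_apply (b : ℝ) (p : ℝ[X]) :
    hermiteRaising b p = (2 * b) • (X * p) - derivative p :=
  rfl

lemma isAdjointPair_derivative_hermiteRaising (hb : 0 < b) :
    (gaussianForm hb).IsAdjointPair (gaussianForm hb)
      (derivative : Module.End ℝ ℝ[X]) (hermiteRaising b) := by
  intro p q
  have hparts := gaussianIntegral_derivative hb (p * q)
  rw [derivative_mul, map_add, ← eq_sub_iff_add_eq] at hparts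
  rw [gaussianForm_apply, gaussianForm_apply, hermiteRaising_apply, mul_sub, mul_smul_comm,
    mul_left_comm p X q, map_sub, map_smul, smul_eq_mul, hparts]

lemma lie_derivative_hermiteRaising (b : ℝ) :
    ⁅(derivative : Module.End ℝ ℝ[X]), hermiteRaising b⁆ = (2 * b) • 1 := by
  refine LinearMap.ext fun p => ?_
  simp only [Ring.lie_def, LinearMap.sub_apply, Module.End.mul_apply, hermiteRaising_apply,
    derivative_sub, derivative_smul, derivative_mul, derivative_X, one_mul, smul_add,
    LinearMap.smul_apply, Module.End.one_apply]
  abel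

theorem gaussianForm_derivative_le (hb : 0 < b) {N : ℕ} {p : ℝ[X]} (hp : p.natDegree ≤ N) :
    gaussianForm hb (derivative p) (derivative p) ≤ 2 * b * N * gaussianForm hb p p :=
  apply_lowering_lowering_le (gaussianForm_isPosSemidef hb)
    (isAdjointPair_derivative_hermiteRaising hb) (lie_derivative_hermiteRaising b) (by positivity)
    (iterate_derivative_eq_zero (Nat.lt_succ_of_le hp))

end GaussianForm

lemma deriv_exp_neg_sq_div_two_mul_add {f : ℝ → ℝ} {x : ℝ} (hf : DifferentiableAt ℝ f x) :
    deriv (fun y => exp (-y ^ 2 / 2) * f y) x + x * (exp (-x ^ 2 / 2) * f x) =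
      exp (-x ^ 2 / 2) * deriv f x := by
  have hexponent : HasDerivAt (fun y : ℝ => -y ^ 2 / 2) (-x) x :=
    ((hasDerivAt_pow 2 x).fun_neg.div_const 2).congr_deriv (by norm_num; ring)
  rw [(hexponent.exp.fun_mul hf.hasDerivAt).deriv]
  ring

lemma L2norm_exp_neg_sq_div_two_mul_eval (p : ℝ[X]) :
    L2norm (fun x => exp (-x ^ 2 / 2) * p.eval x) = √(gaussianForm one_pos p p) := by
  rw [L2norm, gaussianForm_apply, gaussianIntegral_apply]
  congr 2 with x
  have hweight : exp (-x ^ 2 / 2) ^ 2 = exp (-1 * x ^ 2) := by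
    rw [← exp_nat_mul]
    congr 1
    push_cast
    ring
  rw [norm_eq_abs, sq_abs, mul_pow, hweight, eval_mul, sq (p.eval x)]

/-- Inverse inequality: `‖∂̂_x Ψ‖ ≤ C √N ‖Ψ‖` for all `Ψ ∈ P̂_N`, where `∂̂_x = ∂_x + x`. -/
theorem inverse_inequality_hat :
    ∃ C : ℝ, 0 < C ∧ ∀ N : ℕ, 1 ≤ N → ∀ Ψ : ℝ → ℝ, memPNR N Ψ →
      L2norm (fun x => deriv Ψ x + x * Ψ x) ≤ C * Real.sqrt N * L2norm Ψ := by
  refine ⟨√2, by positivity, ?_⟩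
  rintro N - Ψ ⟨p, hp, hΨ⟩
  obtain rfl : Ψ = fun x => exp (-x ^ 2 / 2) * p.eval x := funext hΨ
  have bound : gaussianForm one_pos (derivative p) (derivative p) ≤
      2 * N * gaussianForm one_pos p p := by
    simpa only [mul_one] using gaussianForm_derivative_le one_pos (natDegree_le_of_degree_le hp)
  simp only [deriv_exp_neg_sq_div_two_mul_add p.differentiableAt, Polynomial.deriv]
  calc L2norm (fun x => exp (-x ^ 2 / 2) * (derivative p).eval x)
      = √(gaussianForm one_pos (derivative p) (derivative p)) :=
        L2norm_exp_neg_sq_div_two_mul_eval _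
    _ ≤ √(2 * N * gaussianForm one_pos p p) := sqrt_le_sqrt bound
    _ = √2 * √N * L2norm (fun x => exp (-x ^ 2 / 2) * p.eval x) := by
        rw [sqrt_mul (by positivity), sqrt_mul (by positivity),
          L2norm_exp_neg_sq_div_two_mul_eval]
end
end

section
/- Let h > 1/2 and u(x) = (1 + x²)^{-h}. Then there is a constant C > 0 (depending on h) such that the Fourier transform of u satisfies |𝓕[u](k)| ≤ C (1 + |k|)^{h−1} e^{-|k|} for all k ∈ ℝ; in particular 𝓕[u] decays exponentially at infinity. -/
open MeasureTheory Real
noncomputable section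
/-!
Writing `Γ(h) (1 + x²)^{-h} = ∫₀^∞ t^{h-1} e^{-(1+x²)t} dt` and taking the Fourier transform of the
Gaussian `e^{-tx²}` under the integral sign gives
`√2 Γ(h) 𝓕[u](k) = ∫₀^∞ t^{h-3/2} e^{-t-k²/(4t)} dt`.
For `k > 0` the substitution `t = (k/2) e^θ` turns the right-hand side into
`(k/2)^{h-1/2} ∫ e^{(h-1/2)θ - k cosh θ} dθ`, and since `cosh θ ≥ 1 + θ²/2` this is at most
`(k/2)^{h-1/2} e^{-k}` times a Gaussian integral of size `k^{-1/2}`. For bounded `k` one drops the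
factor `e^{-k²/(4t)}`, which leaves `Γ(h - 1/2)`.
-/

open Set

section Substitution

variable {E : Type*} [NormedAddCommGroup E] [NormedSpace ℝ E]

theorem integral_exp_smul_comp_exp (g : ℝ → E) :
    ∫ θ, exp θ • g (exp θ) = ∫ t in Ioi 0, g t := by
  have change_of_variables := integral_image_eq_integral_abs_deriv_smul MeasurableSet.univ
    (fun θ _ ↦ (Real.hasDerivAt_exp θ).hasDerivWithinAt) exp_injective.injOn g
  simpa only [image_univ, range_exp, abs_exp, setIntegral_univ] using change_of_variables.symm

theorem integral_mul_exp_smul_comp_mul_exp (g : ℝ → E) {c : ℝ} (hc : 0 < c) :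
    ∫ θ, (c * exp θ) • g (c * exp θ) = ∫ t in Ioi 0, g t := by
  have scaling := integral_comp_mul_left_Ioi g 0 hc
  rw [mul_zero] at scaling
  simp only [mul_smul]
  rw [integral_smul, integral_exp_smul_comp_exp (fun t ↦ g (c * t)), scaling,
    smul_inv_smul₀ hc.ne']

end Substitution

section Gaussian

theorem mul_sub_mul_sq_eq (a : ℝ) {b : ℝ} (hb : b ≠ 0) (x : ℝ) :
    a * x - b * x ^ 2 = a ^ 2 / (4 * b) + -b * (x - a / (2 * b)) ^ 2 := by
  field_simp
  ring

theorem integrable_exp_mul_sub_mul_sq (a : ℝ) {b : ℝ} (hb : 0 < b) :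
    Integrable fun x ↦ exp (a * x - b * x ^ 2) := by
  simp only [mul_sub_mul_sq_eq a hb.ne', exp_add]
  exact ((integrable_exp_neg_mul_sq hb).comp_sub_right _).const_mul _

theorem integral_exp_mul_sub_mul_sq (a : ℝ) {b : ℝ} (hb : b ≠ 0) :
    ∫ x, exp (a * x - b * x ^ 2) = exp (a ^ 2 / (4 * b)) * √(π / b) := by
  simp only [mul_sub_mul_sq_eq a hb, exp_add]
  rw [integral_const_mul, integral_sub_right_eq_self (fun x ↦ exp (-b * x ^ 2)), integral_gaussian]

theorem integral_exp_neg_one_add_sq_mul_smul_cexp {t : ℝ} (ht : 0 < t) (k : ℝ) :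
    ∫ x : ℝ, exp (-((1 + x ^ 2) * t)) • Complex.exp (-Complex.I * k * x) =
      ((√(π / t) * exp (-t - k ^ 2 / (4 * t)) : ℝ) : ℂ) := by
  have split_exp (x : ℝ) : exp (-((1 + x ^ 2) * t)) • Complex.exp (-Complex.I * k * x) =
      Complex.exp (-t) * (Complex.exp (Complex.I * -k * x) * Complex.exp (-t * x ^ 2)) := by
    rw [Complex.real_smul, Complex.ofReal_exp]
    simp only [← Complex.exp_add]
    push_cast
    ring_nf
  simp only [split_exp]
  rw [integral_const_mul, fourierIntegral_gaussian (by simpa using ht), sqrt_eq_rpow,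
    sub_eq_add_neg, exp_add]
  push_cast [Complex.ofReal_cpow (show 0 ≤ π / t by positivity)]
  ring_nf

end Gaussian

section Cosh

theorem one_add_sq_div_two_le_cosh (x : ℝ) : 1 + x ^ 2 / 2 ≤ cosh x := by
  have half_angle : cosh x = 1 + 2 * sinh (x / 2) ^ 2 := by
    rw [← mul_div_cancel₀ x two_ne_zero, cosh_two_mul, cosh_sq, mul_div_cancel_left₀ _ two_ne_zero]
    ring
  have sq_le : (x / 2) ^ 2 ≤ sinh (x / 2) ^ 2 := by
    rw [sq_le_sq, abs_sinh]
    exact self_le_sinh_iff.mpr (abs_nonneg _)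
  linarith

theorem integral_exp_mul_sub_mul_cosh_le (ν : ℝ) {z : ℝ} (hz : 0 < z) :
    ∫ θ, exp (ν * θ - z * cosh θ) ≤ exp (-z) * (exp (ν ^ 2 / (2 * z)) * √(2 * π / z)) := by
  have exponent_le (θ : ℝ) : ν * θ - z * cosh θ ≤ -z + (ν * θ - z / 2 * θ ^ 2) := by
    linarith [mul_le_mul_of_nonneg_left (one_add_sq_div_two_le_cosh θ) hz.le]
  calc ∫ θ, exp (ν * θ - z * cosh θ)
      ≤ ∫ θ, exp (-z) * exp (ν * θ - z / 2 * θ ^ 2) :=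
        integral_mono_of_nonneg (.of_forall fun _ ↦ (exp_pos _).le)
          ((integrable_exp_mul_sub_mul_sq ν (half_pos hz)).const_mul _)
          (.of_forall fun θ ↦ by simpa only [← exp_add] using exp_le_exp.mpr (exponent_le θ))
    _ = exp (-z) * (exp (ν ^ 2 / (2 * z)) * √(2 * π / z)) := by
        rw [integral_const_mul, integral_exp_mul_sub_mul_sq ν (half_pos hz).ne']
        ring_nf

end Cosh

theorem rpow_le_rpow_abs_mul_rpow {x y c : ℝ} (hx : 0 < x) (hy : 0 < y) (hxy : x ≤ c * y)
    (hyx : y ≤ c * x) (q : ℝ) : x ^ q ≤ c ^ |q| * y ^ q := by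
  have hc : 0 < c := pos_of_mul_pos_left (hx.trans_le hxy) hy.le
  rcases le_total 0 q with hq | hq
  · rw [abs_of_nonneg hq, ← mul_rpow hc.le hy.le]
    exact rpow_le_rpow hx.le hxy hq
  · rw [abs_of_nonpos hq, rpow_neg hc.le, ← inv_rpow hc.le, ← mul_rpow (inv_pos.mpr hc).le hy.le]
    exact rpow_le_rpow_of_nonpos (by positivity) ((inv_mul_le_iff₀ hc).mpr hyx) hq

/-- The integral `∫₀^∞ t^{ν-1} e^{-t-z²/(4t)} dt`, which for `z > 0` equals `2 (z/2)^ν K_ν(z)` with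
`K_ν` the modified Bessel function of the second kind. Unlike `K_ν`, for `ν > 0` it is finite at
`z = 0`. -/
def besselKIntegral (ν z : ℝ) : ℝ :=
  ∫ t in Ioi 0, t ^ (ν - 1) * exp (-t - z ^ 2 / (4 * t))

section BesselK

variable {ν z : ℝ}

theorem besselKIntegral_abs (ν z : ℝ) : besselKIntegral ν |z| = besselKIntegral ν z := by
  simp only [besselKIntegral, sq_abs]

theorem besselKIntegral_nonneg (ν z : ℝ) : 0 ≤ besselKIntegral ν z :=
  setIntegral_nonneg measurableSet_Ioi fun _ ht ↦
    mul_nonneg (rpow_nonneg (le_of_lt ht) _) (exp_pos _).le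

theorem besselKIntegral_le_Gamma (hν : 0 < ν) (z : ℝ) : besselKIntegral ν z ≤ Gamma ν := by
  rw [Gamma_eq_integral hν]
  refine integral_mono_of_nonneg ?_ (GammaIntegral_convergent hν) ?_
  all_goals filter_upwards [ae_restrict_mem measurableSet_Ioi] with t (ht : 0 < t)
  · positivity
  · rw [mul_comm]
    have : 0 ≤ z ^ 2 / (4 * t) := by positivity
    gcongr
    linarith

theorem besselKIntegral_eq_integral_exp_cosh (ν : ℝ) (hz : 0 < z) :
    besselKIntegral ν z = (z / 2) ^ ν * ∫ θ, exp (ν * θ - z * cosh θ) := by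
  have exponent_eq (θ : ℝ) :
      -(z / 2 * exp θ) - z ^ 2 / (4 * (z / 2 * exp θ)) = -(z * cosh θ) := by
    rw [cosh_eq, exp_neg]
    field_simp
    ring
  rw [besselKIntegral, ← integral_mul_exp_smul_comp_mul_exp _ (half_pos hz), ← integral_const_mul]
  congr with θ
  have power_eq : z / 2 * exp θ * (z / 2 * exp θ) ^ (ν - 1) = (z / 2) ^ ν * exp (ν * θ) := by
    rw [rpow_sub_one (by positivity), mul_div_cancel₀ _ (by positivity),
      mul_rpow (by positivity) (exp_pos θ).le, ← exp_mul, mul_comm θ]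
  rw [exponent_eq, smul_eq_mul, ← mul_assoc, power_eq, sub_eq_add_neg, exp_add, mul_assoc]

theorem besselKIntegral_le_rpow_mul_exp (ν : ℝ) (hz : 1 ≤ z) :
    besselKIntegral ν z ≤
      2⁻¹ ^ ν * √(2 * π) * exp (ν ^ 2 / 2) * (z ^ (ν - 1 / 2) * exp (-z)) := by
  have hz₀ : 0 < z := one_pos.trans_le hz
  calc besselKIntegral ν z
      = (z / 2) ^ ν * ∫ θ, exp (ν * θ - z * cosh θ) := besselKIntegral_eq_integral_exp_cosh ν hz₀
    _ ≤ (z / 2) ^ ν * (exp (-z) * (exp (ν ^ 2 / (2 * z)) * √(2 * π / z))) := by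
        gcongr
        exact integral_exp_mul_sub_mul_cosh_le ν hz₀
    _ ≤ (z / 2) ^ ν * (exp (-z) * (exp (ν ^ 2 / 2) * √(2 * π / z))) := by
        gcongr
        linarith
    _ = 2⁻¹ ^ ν * √(2 * π) * exp (ν ^ 2 / 2) * (z ^ (ν - 1 / 2) * exp (-z)) := by
        rw [div_eq_mul_inv z, mul_rpow hz₀.le (by positivity), sqrt_div (by positivity),
          rpow_sub hz₀, ← sqrt_eq_rpow]
        ring

theorem exists_besselKIntegral_le (hν : 0 < ν) :
    ∃ C, 0 < C ∧ ∀ z, 0 ≤ z → besselKIntegral ν z ≤ C * (1 + z) ^ (ν - 1 / 2) * exp (-z) := by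
  set q := ν - 1 / 2
  set A := 2⁻¹ ^ ν * √(2 * π) * exp (ν ^ 2 / 2)
  set B := Gamma ν * exp 1
  have hAB : 0 < max A B := lt_max_of_lt_left (by positivity)
  have bound_max (z : ℝ) : besselKIntegral ν z ≤ max A B * (max 1 z ^ q * exp (-z)) := by
    rcases le_total z 1 with hz | hz
    · calc besselKIntegral ν z ≤ Gamma ν := besselKIntegral_le_Gamma hν z
        _ ≤ Gamma ν * exp (1 - z) :=
            le_mul_of_one_le_right (Gamma_pos_of_pos hν).le (one_le_exp (by linarith))
        _ = B * (1 ^ q * exp (-z)) := by rw [sub_eq_add_neg, exp_add, one_rpow]; ring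
        _ ≤ max A B * (max 1 z ^ q * exp (-z)) := by
            rw [max_eq_left hz]
            gcongr
            exact le_max_right A B
    · rw [max_eq_right hz]
      exact (besselKIntegral_le_rpow_mul_exp ν hz).trans (by gcongr; exact le_max_left A B)
  refine ⟨max A B * 2 ^ |q|, mul_pos hAB (by positivity), fun z hz ↦ (bound_max z).trans ?_⟩
  have max_rpow_le : max 1 z ^ q ≤ 2 ^ |q| * (1 + z) ^ q :=
    rpow_le_rpow_abs_mul_rpow (by positivity) (by positivity)
      (max_le (by linarith) (by linarith))
      (by linarith [le_max_left 1 z, le_max_right 1 z]) q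
  calc max A B * (max 1 z ^ q * exp (-z))
      ≤ max A B * (2 ^ |q| * (1 + z) ^ q * exp (-z)) := by gcongr
    _ = max A B * 2 ^ |q| * (1 + z) ^ q * exp (-z) := by ring

end BesselK

section Subordination

theorem integral_rpow_mul_exp_neg_mul_eq_rpow_neg {h r : ℝ} (hh : 0 < h) (hr : 0 < r) :
    ∫ t in Ioi 0, t ^ (h - 1) * exp (-(r * t)) = Gamma h * r ^ (-h) := by
  rw [integral_rpow_mul_exp_neg_mul_Ioi hh hr, one_div, inv_rpow hr.le, rpow_neg hr.le, mul_comm]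

theorem integrableOn_rpow_mul_exp_neg_mul {h r : ℝ} (hh : 0 < h) (hr : 0 < r) :
    IntegrableOn (fun t ↦ t ^ (h - 1) * exp (-(r * t))) (Ioi 0) := by
  simpa using integrableOn_rpow_mul_exp_neg_mul_rpow (p := 1) (s := h - 1) (by linarith) one_pos hr

variable {α E : Type*} [MeasurableSpace α] {μ : Measure α}
  [NormedAddCommGroup E] [NormedSpace ℝ E] {f : α → ℝ} {φ : α → E} {h : ℝ}

theorem integrable_prod_rpow_mul_exp_neg_mul_smul (hh : 0 < h) (hf : Measurable f)
    (hf_pos : ∀ x, 0 < f x) (hφ : AEStronglyMeasurable φ μ)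
    (hint : Integrable (fun x ↦ f x ^ (-h) • φ x) μ) :
    Integrable (fun p : α × ℝ ↦ (p.2 ^ (h - 1) * exp (-(f p.1 * p.2))) • φ p.1)
      (μ.prod (volume.restrict (Ioi 0))) := by
  have kernel_measurable : Measurable fun p : α × ℝ ↦ p.2 ^ (h - 1) * exp (-(f p.1 * p.2)) := by
    fun_prop
  refine (integrable_prod_iff (kernel_measurable.aestronglyMeasurable.smul hφ.comp_fst)).mpr
    ⟨.of_forall fun x ↦ (integrableOn_rpow_mul_exp_neg_mul hh (hf_pos x)).smul_const (φ x), ?_⟩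
  refine (hint.norm.const_mul (Gamma h)).congr (.of_forall fun x ↦ ?_)
  calc Gamma h * ‖f x ^ (-h) • φ x‖
      = (∫ t in Ioi 0, t ^ (h - 1) * exp (-(f x * t))) * ‖φ x‖ := by
        rw [integral_rpow_mul_exp_neg_mul_eq_rpow_neg hh (hf_pos x), norm_smul,
          norm_of_nonneg (rpow_nonneg (hf_pos x).le _), mul_assoc]
    _ = ∫ t in Ioi 0, ‖(t ^ (h - 1) * exp (-(f x * t))) • φ x‖ := by
        rw [← integral_mul_const]
        refine setIntegral_congr_fun measurableSet_Ioi fun t (ht : 0 < t) ↦ ?_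
        rw [norm_smul, norm_of_nonneg (by positivity)]

theorem Gamma_smul_integral_rpow_neg_smul [SFinite μ] [CompleteSpace E] (hh : 0 < h)
    (hf : Measurable f) (hf_pos : ∀ x, 0 < f x) (hφ : AEStronglyMeasurable φ μ)
    (hint : Integrable (fun x ↦ f x ^ (-h) • φ x) μ) :
    Gamma h • ∫ x, f x ^ (-h) • φ x ∂μ =
      ∫ t in Ioi 0, t ^ (h - 1) • ∫ x, exp (-(f x * t)) • φ x ∂μ := by
  calc Gamma h • ∫ x, f x ^ (-h) • φ x ∂μ
      = ∫ x, (∫ t in Ioi 0, (t ^ (h - 1) * exp (-(f x * t))) • φ x) ∂μ := by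
        rw [← integral_smul]
        congr with x
        rw [integral_smul_const, integral_rpow_mul_exp_neg_mul_eq_rpow_neg hh (hf_pos x), mul_smul]
    _ = ∫ t in Ioi 0, ∫ x, (t ^ (h - 1) * exp (-(f x * t))) • φ x ∂μ :=
        integral_integral_swap (integrable_prod_rpow_mul_exp_neg_mul_smul hh hf hf_pos hφ hint)
    _ = ∫ t in Ioi 0, t ^ (h - 1) • ∫ x, exp (-(f x * t)) • φ x ∂μ := by
        simp only [mul_smul, integral_smul]

end Subordination

section FourierTransform

variable {h : ℝ}

theorem integrable_one_add_sq_rpow_neg (hh : 1 / 2 < h) :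
    Integrable fun x : ℝ ↦ (1 + x ^ 2) ^ (-h) := by
  have bracket_integrable := integrable_rpow_neg_one_add_norm_sq (E := ℝ) (μ := volume)
    (r := 2 * h) (by simpa using (by linarith : 1 < 2 * h))
  simpa [neg_div] using bracket_integrable

theorem Gamma_smul_integral_one_add_sq_rpow_neg_smul_cexp (hh : 1 / 2 < h) (k : ℝ) :
    Gamma h • ∫ x : ℝ, (1 + x ^ 2) ^ (-h) • Complex.exp (-Complex.I * k * x) =
      ((√π * besselKIntegral (h - 1 / 2) k : ℝ) : ℂ) := by
  have phase_continuous : Continuous fun x : ℝ ↦ Complex.exp (-Complex.I * k * x) := by fun_prop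
  have integrable_mul_phase :
      Integrable fun x : ℝ ↦ (1 + x ^ 2) ^ (-h) • Complex.exp (-Complex.I * k * x) :=
    (integrable_one_add_sq_rpow_neg hh).smul_bdd 1 phase_continuous.aestronglyMeasurable
      (.of_forall fun x ↦ by simp [Complex.norm_exp])
  rw [Gamma_smul_integral_rpow_neg_smul (by linarith) (by fun_prop) (fun x ↦ by positivity)
    phase_continuous.aestronglyMeasurable integrable_mul_phase, besselKIntegral,
    ← integral_const_mul, ← integral_complex_ofReal]
  refine setIntegral_congr_fun measurableSet_Ioi fun t (ht : 0 < t) ↦ ?_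
  have power_eq : t ^ (h - 1 / 2 - 1) = t ^ (h - 1) / √t := by
    rw [sqrt_eq_rpow, ← rpow_sub ht]
    ring_nf
  rw [integral_exp_neg_one_add_sq_mul_smul_cexp ht, power_eq, sqrt_div pi_pos.le, Complex.real_smul]
  push_cast
  ring

theorem FT_one_add_sq_rpow_neg (hh : 1 / 2 < h) (k : ℝ) :
    FT (fun x ↦ (((1 + x ^ 2 : ℝ) ^ (-h) : ℝ) : ℂ)) k =
      (((√2 * Gamma h)⁻¹ * besselKIntegral (h - 1 / 2) k : ℝ) : ℂ) := by
  have Gamma_ne_zero : Gamma h ≠ 0 := (Gamma_pos_of_pos (by linarith)).ne'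
  have integral_eq := (eq_inv_smul_iff₀ Gamma_ne_zero).mpr
    (Gamma_smul_integral_one_add_sq_rpow_neg_smul_cexp hh k)
  simp only [Complex.real_smul] at integral_eq
  rw [FT, integral_eq, sqrt_mul zero_le_two]
  norm_cast
  field_simp

end FourierTransform

/-- The Fourier transform of `(1+x²)^{-h}` decays like `(1+|k|)^{h-1} e^{-|k|}`. -/
theorem fourier_decay_of_algebraic (h : ℝ) (hh : 1 / 2 < h) :
    ∃ C : ℝ, 0 < C ∧ ∀ k : ℝ,
      ‖FT (fun x => ((((1 + x ^ 2 : ℝ)) ^ (-h) : ℝ) : ℂ)) k‖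
        ≤ C * (1 + |k|) ^ (h - 1) * Real.exp (-|k|) := by
  have hΓ : 0 < Gamma h := Gamma_pos_of_pos (by linarith)
  obtain ⟨C, hC, bessel_le⟩ := exists_besselKIntegral_le (sub_pos.mpr hh)
  refine ⟨(√2 * Gamma h)⁻¹ * C, mul_pos (inv_pos.mpr (mul_pos (by positivity) hΓ)) hC, fun k ↦ ?_⟩
  calc ‖FT (fun x => ((((1 + x ^ 2 : ℝ)) ^ (-h) : ℝ) : ℂ)) k‖
      = (√2 * Gamma h)⁻¹ * besselKIntegral (h - 1 / 2) |k| := by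
        rw [FT_one_add_sq_rpow_neg hh, besselKIntegral_abs,
          Complex.norm_of_nonneg (mul_nonneg (by positivity) (besselKIntegral_nonneg _ _))]
    _ ≤ (√2 * Gamma h)⁻¹ * (C * (1 + |k|) ^ (h - 1 / 2 - 1 / 2) * exp (-|k|)) := by
        gcongr
        exact bessel_le |k| (abs_nonneg k)
    _ = (√2 * Gamma h)⁻¹ * C * (1 + |k|) ^ (h - 1) * exp (-|k|) := by ring_nf
end
end
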